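/- arXiv:2512.12591 — 2 statements merged into one kernel-verified Lean document; each statement's English description precedes it below -/
import Mathlib

section
/- For every positive integer k, N(k+1,1) − N(k,1) = 2 if and only if k = 2^s − s − 1 for some integer s ≥ 2. -/
/-!
A code of size `2 ^ k` and minimum distance at least `3` exists in length `n` exactly when
`(n + 1) * 2 ^ k ≤ 2 ^ n`. Necessity is the sphere-packing bound (`sphere_packing`). For
sufficiency (`exists_code`), write `n = k + r`; the inequality becomes `n + 1 ≤ 2 ^ r`, so
`F_2^r` has at least `n` distinct nonzero vectors, which serve as the columns of a parity-check
matrix (a shortened Hamming code). Every fibre of the syndrome map has minimum distance at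
least `3`, and some fibre has at least `2 ^ (n - r) = 2 ^ k` elements.

Hence `N k 1 = k + r`, where `r` is the least number with `k + 1 ≤ 2 ^ r - r`. Since
`r ↦ 2 ^ r - r` increases strictly from `r = 1` on, the redundancy `r` goes up by one from `k`
to `k + 1` exactly when `k + 1 = 2 ^ r - r`.
-/

/-- `N k e`: the minimal length `n` such that there exists a binary code
`C ⊆ F_2^n` with `|C| = 2^k` and minimum Hamming distance `≥ 2e+1`. -/
noncomputable def N (k e : ℕ) : ℕ :=
  sInf {n : ℕ | ∃ C : Finset (Fin n → ZMod 2), C.card = 2 ^ k ∧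
    ∀ u ∈ C, ∀ v ∈ C, u ≠ v → 2 * e + 1 ≤ hammingDist u v}

/-- The sphere-packing bound for single-error-correcting codes: the radius-one balls around the
codewords, each indexed by `Option (Fin n)`, are disjoint. -/
lemma sphere_packing {n : ℕ} (C : Finset (Fin n → ZMod 2))
    (hC : ∀ u ∈ C, ∀ v ∈ C, u ≠ v → 3 ≤ hammingDist u v) :
    (n + 1) * C.card ≤ 2 ^ n := by
  classical
  let e : Option (Fin n) → Fin n → ZMod 2 := fun a => a.elim 0 (fun i => Pi.single i 1)
  have he : ∀ (u : Fin n → ZMod 2) a, hammingDist u (u + e a) ≤ 1 := by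
    intro u a
    rcases a with _ | i
    · simp [e]
    · unfold hammingDist
      refine (Finset.card_le_card (t := {i}) ?_).trans (by simp)
      intro j hj
      by_contra hji
      simp only [Finset.mem_singleton] at hji
      simp [e, hji] at hj
  have hinj : Function.Injective e := by
    intro a b hab
    rcases a with _ | i <;> rcases b with _ | j
    · rfl
    · have := congrFun hab j
      simp [e] at this
    · have := congrFun hab i
      simp [e] at this
    · have := congrFun hab i
      by_cases hij : i = j
      · rw [hij]
      · simp [e, hij] at this
  have hcard : Fintype.card ({u // u ∈ C} × Option (Fin n)) ≤
      Fintype.card (Fin n → ZMod 2) := by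
    refine Fintype.card_le_of_injective (fun p => p.1.1 + e p.2) ?_
    rintro ⟨⟨u, hu⟩, a⟩ ⟨⟨v, hv⟩, b⟩ h
    simp only at h
    have huv : u = v := by
      by_contra hne
      have h1 := hC u hu v hv hne
      have h2 := hammingDist_triangle u (u + e a) v
      have h3 := he u a
      have h4 := he v b
      rw [hammingDist_comm, ← h] at h4
      omega
    subst huv
    have := hinj (add_left_cancel h)
    subst this
    rfl
  simp only [Fintype.card_prod, Fintype.card_coe, Fintype.card_option, Fintype.card_fin,
    Fintype.card_pi, ZMod.card, Finset.prod_const, Finset.card_univ] at hcard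
  rwa [mul_comm] at hcard

/-- A shortened Hamming code, or one of its cosets, of redundancy `r`, cut down to exactly
`2 ^ k` words. -/
lemma exists_code {k r : ℕ} (h : k + r + 1 ≤ 2 ^ r) :
    ∃ C : Finset (Fin (k + r) → ZMod 2), C.card = 2 ^ k ∧
      ∀ u ∈ C, ∀ v ∈ C, u ≠ v → 3 ≤ hammingDist u v := by
  classical
  -- The columns of the parity-check matrix: distinct nonzero vectors of `F_2^r`.
  obtain ⟨c⟩ : Nonempty (Fin (k + r) ↪ {x : Fin r → ZMod 2 // x ≠ 0}) := by
    apply Function.Embedding.nonempty_of_card_le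
    have : Fintype.card {x : Fin r → ZMod 2 // x ≠ 0} = 2 ^ r - 1 := by
      rw [Fintype.card_subtype_compl]
      simp [ZMod.card]
    rw [this, Fintype.card_fin]
    omega
  let H : (Fin (k + r) → ZMod 2) → (Fin r → ZMod 2) := fun u => ∑ i, u i • (c i).1
  obtain ⟨y, -, hy⟩ := Finset.exists_le_card_fiber_of_mul_le_card_of_maps_to
    (s := (Finset.univ : Finset (Fin (k + r) → ZMod 2)))
    (t := (Finset.univ : Finset (Fin r → ZMod 2))) (f := H) (n := 2 ^ k)
    (fun _ _ => Finset.mem_univ _) Finset.univ_nonempty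
    (by simp [ZMod.card, pow_add, mul_comm])
  obtain ⟨C, hCs, hCc⟩ := Finset.exists_subset_card_eq hy
  refine ⟨C, hCc, fun u hu v hv huv => ?_⟩
  have hu' : H u = y := by simpa using hCs hu
  have hv' : H v = y := by simpa using hCs hv
  -- Two words with the same syndrome: the columns where they differ add up to zero.
  have hsum : ∑ i with u i ≠ v i, (c i).1 = 0 := by
    have h0 : ∑ i, (u i - v i) • (c i).1 = 0 := by
      simp only [sub_smul, Finset.sum_sub_distrib]
      exact sub_eq_zero.2 (hu'.trans hv'.symm)
    refine Eq.trans ?_ h0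
    rw [Finset.sum_filter]
    refine Finset.sum_congr rfl fun i _ => ?_
    have hb : ∀ a b : ZMod 2, a ≠ b → a - b = 1 := by decide
    split_ifs with hi
    · rw [hb _ _ hi, one_smul]
    · rw [not_not.1 hi, sub_self, zero_smul]
  have hpos : 0 < hammingDist u v := hammingDist_pos.2 huv
  by_contra hlt
  have h12 : hammingDist u v = 1 ∨ hammingDist u v = 2 := by omega
  unfold hammingDist at h12
  rcases h12 with h1 | h2
  · obtain ⟨i, hi⟩ := Finset.card_eq_one.1 h1
    rw [hi, Finset.sum_singleton] at hsum
    exact (c i).2 hsum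
  · obtain ⟨i, j, hij, hD⟩ := Finset.card_eq_two.1 h2
    rw [hD, Finset.sum_pair hij] at hsum
    refine hij (c.injective (Subtype.ext (funext fun t => ?_)))
    have hb : ∀ a b : ZMod 2, a + b = 0 → a = b := by decide
    exact hb _ _ (congrFun hsum t)

/-- If `r + 1` is the least redundancy allowed by the sphere-packing bound for dimension `k`,
then it is attained. Testing `r` alone is enough, because `2 ^ j - j` is monotone in `j`. -/
lemma N_eq {k r : ℕ} (h1 : 2 ^ r < k + r + 1) (h2 : k + (r + 1) + 1 ≤ 2 ^ (r + 1)) :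
    N k 1 = k + (r + 1) := by
  apply le_antisymm
  · exact Nat.sInf_le (exists_code h2)
  · refine le_csInf ⟨_, exists_code h2⟩ ?_
    rintro n ⟨C, hCc, hC⟩
    have hsp := sphere_packing C hC
    rw [hCc] at hsp
    by_contra hn
    have hkn : k ≤ n := by
      by_contra hlt
      have : 2 ^ n < 2 ^ k := Nat.pow_lt_pow_right (by norm_num) (by omega)
      nlinarith [Nat.zero_le (n * 2 ^ k)]
    obtain ⟨j, rfl⟩ := Nat.exists_eq_add_of_le hkn
    have hj : k + j + 1 ≤ 2 ^ j := by
      rw [pow_add, mul_comm] at hsp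
      exact Nat.le_of_mul_le_mul_left hsp (by positivity)
    have hmono : ∀ m, j ≤ m → k + m + 1 ≤ 2 ^ m := by
      intro m hm
      induction m, hm using Nat.le_induction with
      | base => exact hj
      | succ m _ ih =>
        have := Nat.one_le_two_pow (n := m)
        rw [pow_succ]
        omega
    have := hmono r (by omega)
    omega

lemma exists_N_eq {k : ℕ} (hk : 0 < k) :
    ∃ r, 2 ^ r < k + r + 1 ∧ k + (r + 1) + 1 ≤ 2 ^ (r + 1) ∧ N k 1 = k + (r + 1) := by
  have hex : ∃ r, k + r + 1 ≤ 2 ^ r := by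
    refine ⟨k + 1, ?_⟩
    have := Nat.lt_two_pow_self (n := k)
    rw [pow_succ]
    omega
  have hmin := fun m => Nat.find_min hex (m := m)
  have hspec := Nat.find_spec hex
  generalize Nat.find hex = t at hmin hspec
  rcases t with _ | r
  · norm_num at hspec
    omega
  · have hr : 2 ^ r < k + r + 1 := not_le.1 (hmin r (Nat.lt_succ_self r))
    exact ⟨r, hr, hspec, N_eq hr hspec⟩

/-- For every positive integer `k`, `N(k+1,1) − N(k,1) = 2` iff `k = 2^s − s − 1`
for some integer `s ≥ 2`. -/
theorem N_succ_jump_iff (k : ℕ) (hk : 0 < k) :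
    N (k + 1) 1 = N k 1 + 2 ↔ ∃ s : ℕ, 2 ≤ s ∧ k = 2 ^ s - s - 1 := by
  constructor
  · intro h
    obtain ⟨r, -, hr2, hr⟩ := exists_N_eq hk
    obtain ⟨t, ht1, -, ht⟩ := exists_N_eq (Nat.succ_pos k)
    rw [Nat.succ_eq_add_one] at ht ht1
    obtain rfl : t = r + 1 := by omega
    refine ⟨r + 1, ?_, by omega⟩
    rcases r with _ | r
    · norm_num at hr2
      omega
    · omega
  · rintro ⟨s, hs, hks⟩
    obtain ⟨r, rfl⟩ : ∃ r, s = r + 1 := ⟨s - 1, by omega⟩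
    have hp : 2 ^ (r + 1) = 2 * 2 ^ r := by rw [pow_succ, mul_comm]
    have hp' : 2 ^ (r + 1 + 1) = 2 * 2 ^ (r + 1) := by rw [pow_succ, mul_comm]
    have hr : r < 2 ^ r := Nat.lt_two_pow_self
    rw [N_eq (k := k) (r := r) (by omega) (by omega),
      N_eq (k := k + 1) (r := r + 1) (by omega) (by omega)]
    omega
end

section
/- There is no linear [29,17,7]_2 code: no 17-dimensional F_2-subspace of F_2^{29} has minimum Hamming distance at least 7. Consequently NL(17,3) ≥ 30, which exceeds the Hamming bound Ham(17,3) = 29. -/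
/-!
Suppose `C` is a linear `[29, 17, 7]₂` code. Identify `F_2^29` with the subsets of the 29
coordinates, addition being symmetric difference. There are `2 ^ 12 = 4096` cosets of `C`, and the
`1 + 29 + 406 + 3654 = 4090` sets of size at most `3` lie in distinct cosets, so at most `6` cosets
remain (`card_ball`).

A 4-set is *uncovered* when its coset contains no set of size at most `3`. Two uncovered 4-sets that
both contain `{0, 1}` have a symmetric difference of size at most `4 < 7`, so they lie in distinct
remaining cosets. Thus there are at most `6` of them. They involve at most `12` of the `27` other
coordinates, so for some `c ∉ {0, 1}` every 4-set `{0, 1, c, d}` is covered, which means that it is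
contained in a codeword of weight `7`. Two distinct codewords of weight `7` share at most three
coordinates, so the codewords of weight `7` through `{0, 1, c}` partition the remaining `26`
coordinates into blocks of size `4`, which is absurd (`no_code_sets`).

Codes shorter than 29 are excluded by padding with zeros (`pad_code`). Since `NL` is an infimum of
natural numbers, with value `0` on the empty set, the bound `30 ≤ NL 17 3` also needs some code of
dimension 17 and distance at least 7; seven-fold repetition provides one (`exists_code`).
-/

/-- `NL k e`: the minimal length `n` such that there exists a `k`-dimensional linear
subspace `C ⊆ F_2^n` with minimum Hamming distance `≥ 2e+1`. -/
noncomputable def NL (k e : ℕ) : ℕ :=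
  sInf {n : ℕ | ∃ C : Submodule (ZMod 2) (Fin n → ZMod 2),
    Module.finrank (ZMod 2) C = k ∧ ∀ x ∈ C, x ≠ 0 → 2 * e + 1 ≤ hammingNorm x}

/-- `Ham k e`: the Hamming (sphere-packing) bound, the smallest `n` with
`(Σ_{i=0}^{e} binom(n,i)) · 2^k ≤ 2^n`. -/
noncomputable def Ham (k e : ℕ) : ℕ :=
  sInf {n : ℕ | (∑ i ∈ Finset.range (e + 1), n.choose i) * 2 ^ k ≤ 2 ^ n}

open Finset

theorem card_filter_card_le (n : ℕ) :
    (univ.filter fun A : Finset (Fin n) => A.card ≤ 3).card = ∑ i ∈ range 4, n.choose i := by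
  have h : (univ.filter fun A : Finset (Fin n) => A.card ≤ 3) =
      (range 4).biUnion fun i => powersetCard i univ := by
    ext A
    simp [mem_powersetCard, Nat.lt_succ_iff]
  rw [h, card_biUnion]
  · simp [card_powersetCard]
  · intro i _ j _ hij
    exact pairwise_disjoint_powersetCard _ hij

theorem card_ball : (univ.filter fun A : Finset (Fin 29) => A.card ≤ 3).card = 4090 :=
  (card_filter_card_le 29).trans (by decide)

theorem card_symmDiff_add {α : Type*} [DecidableEq α] (A B : Finset α) :
    (symmDiff A B).card + 2 * (A ∩ B).card = A.card + B.card := by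
  have h1 : (symmDiff A B).card = (A \ B).card + (B \ A).card :=
    card_union_of_disjoint disjoint_sdiff_sdiff
  have h2 := card_sdiff_add_card_inter A B
  have h3 := card_sdiff_add_card_inter B A
  rw [inter_comm B A] at h3
  omega

/-- The combinatorial core: `f` plays the role of the syndrome map and `S` that of the code, with
words written as their supports. -/
theorem no_code_sets {Q : Type*} [Fintype Q] (hQ : Fintype.card Q = 4096)
    (S : Set (Finset (Fin 29))) (f : Finset (Fin 29) → Q)
    (hf : ∀ A B, f A = f B ↔ symmDiff A B ∈ S)
    (hS : ∀ A ∈ S, A ≠ ∅ → 7 ≤ A.card)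
    (hadd : ∀ A ∈ S, ∀ B ∈ S, symmDiff A B ∈ S) : False := by
  classical
  have hinj : ∀ A B, f A = f B → (symmDiff A B).card < 7 → A = B := by
    intro A B h hc
    by_contra hne
    have := hS _ ((hf A B).1 h) (fun h0 => hne (symmDiff_eq_bot.1 h0))
    omega
  -- The families are known only through membership, since unfolding
  -- `univ : Finset (Finset (Fin 29))` is infeasible.
  obtain ⟨Ball, hBall, hB0⟩ : ∃ F : Finset (Finset (Fin 29)),
      (∀ A, A ∈ F ↔ A.card ≤ 3) ∧ F.card = 4090 :=
    ⟨_, mem_filter_univ, card_ball⟩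
  obtain ⟨E, hE⟩ : ∃ F : Finset (Finset (Fin 29)),
      ∀ A, A ∈ F ↔ A.card = 4 ∧ 0 ∈ A ∧ 1 ∈ A ∧ f A ∉ Ball.image f :=
    ⟨univ.filter _, mem_filter_univ⟩
  have hBc : (Ball.image f).card = 4090 := by
    rw [card_image_of_injOn, hB0]
    intro A hA B hB h
    have hA' : A.card ≤ 3 := (hBall A).1 hA
    have hB' : B.card ≤ 3 := (hBall B).1 hB
    have := card_symmDiff_add A B
    exact hinj A B h (by omega)
  have hEc : (E.image f).card = E.card := by
    rw [card_image_of_injOn]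
    intro A hA B hB h
    obtain ⟨hA4, hA0, hA1, -⟩ := (hE A).1 hA
    obtain ⟨hB4, hB0, hB1, -⟩ := (hE B).1 hB
    have := card_symmDiff_add A B
    have h2 : ({0, 1} : Finset (Fin 29)).card ≤ (A ∩ B).card := by
      apply card_le_card
      intro x hx
      simp only [mem_insert, mem_singleton] at hx
      rcases hx with rfl | rfl <;> simp [*]
    have h3 : ({0, 1} : Finset (Fin 29)).card = 2 := by decide
    exact hinj A B h (by omega)
  have hE6 : E.card ≤ 6 := by
    have hd : Disjoint (Ball.image f) (E.image f) := by
      rw [disjoint_right]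
      intro q hq
      obtain ⟨A, hA, rfl⟩ := mem_image.1 hq
      exact ((hE A).1 hA).2.2.2
    have := card_le_univ (Ball.image f ∪ E.image f)
    rw [card_union_of_disjoint hd] at this
    omega
  obtain ⟨c, hc⟩ : ∃ c, c ∉ ({0, 1} : Finset (Fin 29)) ∪ E.biUnion fun A => A \ {0, 1} := by
    by_contra! h
    have h0 : (univ : Finset (Fin 29)) ⊆ {0, 1} ∪ E.biUnion fun A => A \ {0, 1} := by
      intro x _
      exact h x
    have h1 := card_le_card h0
    rw [card_univ, Fintype.card_fin] at h1
    have h2 := card_union_le ({0, 1} : Finset (Fin 29)) (E.biUnion fun A => A \ {0, 1})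
    have h3 : (E.biUnion fun A => A \ {0, 1}).card ≤ E.card * 2 := by
      apply card_biUnion_le_card_mul
      intro A hA
      obtain ⟨hA4, hA0, hA1, -⟩ := (hE A).1 hA
      rw [card_sdiff_of_subset (by intro x; simp; rintro (rfl | rfl) <;> assumption), hA4]
      decide
    have h4 : ({0, 1} : Finset (Fin 29)).card = 2 := by decide
    omega
  have hc0 : c ≠ 0 := by rintro rfl; simp at hc
  have hc1 : c ≠ 1 := by rintro rfl; simp at hc
  set T : Finset (Fin 29) := {0, 1, c} with hT
  have hT3 : T.card = 3 := by
    rw [hT, card_eq_three]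
    exact ⟨0, 1, c, by decide, hc0.symm, hc1.symm, rfl⟩
  obtain ⟨W, hW⟩ : ∃ F : Finset (Finset (Fin 29)), ∀ A, A ∈ F ↔ A ∈ S ∧ A.card = 7 ∧ T ⊆ A :=
    ⟨univ.filter _, mem_filter_univ⟩
  have hcov : ∀ d, d ∉ T → ∃ A ∈ W, d ∈ A := by
    intro d hd
    have hA4 : (insert d T).card = 4 := by rw [card_insert_of_notMem hd, hT3]
    have hnE : insert d T ∉ E := by
      intro h
      apply hc
      rw [mem_union, mem_biUnion]
      exact Or.inr ⟨_, h, by simp [hT, hc0, hc1]⟩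
    have hcovd : f (insert d T) ∈ Ball.image f := by
      by_contra hn
      exact hnE ((hE _).2 ⟨hA4, by simp [hT], by simp [hT], hn⟩)
    obtain ⟨B, hB, hfB⟩ := mem_image.1 hcovd
    have hB3 : B.card ≤ 3 := (hBall B).1 hB
    have hmem := (hf _ _).1 hfB.symm
    have h7 := hS _ hmem (fun h0 => by
      have := symmDiff_eq_bot.1 h0
      rw [this] at hA4
      omega)
    have hsd := card_symmDiff_add (insert d T) B
    -- `7 ≤ |A ∆ B| = 4 + |B| - 2|A ∩ B|` with `|B| ≤ 3` forces `A` and `B` to be disjoint.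
    have hdis : Disjoint (insert d T) B := by
      rw [disjoint_iff_inter_eq_empty, ← card_eq_zero]
      omega
    have hsub : insert d T ⊆ symmDiff (insert d T) B := by
      rw [hdis.symmDiff_eq_sup]
      exact subset_union_left
    refine ⟨_, (hW _).2 ⟨hmem, by omega, ?_⟩, hsub (mem_insert_self _ _)⟩
    exact (subset_insert _ _).trans hsub
  have hpart : univ \ T = W.biUnion fun A => A \ T := by
    ext d
    simp only [mem_sdiff, mem_univ, true_and, mem_biUnion]
    constructor
    · intro hd
      obtain ⟨A, hA, hdA⟩ := hcov d hd
      exact ⟨A, hA, hdA, hd⟩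
    · rintro ⟨A, -, -, hd⟩
      exact hd
  have hcard : (univ \ T).card = W.card * 4 := by
    rw [hpart, card_biUnion]
    · apply sum_const_nat
      intro A hA
      obtain ⟨-, h7, hTA⟩ := (hW A).1 hA
      rw [card_sdiff_of_subset hTA, h7, hT3]
    · intro A hA B hB hAB
      obtain ⟨hAS, hA7, hTA⟩ := (hW A).1 hA
      obtain ⟨hBS, hB7, hTB⟩ := (hW B).1 hB
      refine disjoint_left.2 ?_
      intro d hdA hdB
      rw [mem_sdiff] at hdA hdB
      have h4 : (insert d T).card ≤ (A ∩ B).card := by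
        apply card_le_card
        rw [insert_subset_iff]
        exact ⟨mem_inter.2 ⟨hdA.1, hdB.1⟩, subset_inter hTA hTB⟩
      rw [card_insert_of_notMem hdA.2, hT3] at h4
      have := card_symmDiff_add A B
      exact hAB (hinj A B ((hf A B).2 (hadd A hAS B hBS)) (by omega))
  rw [card_sdiff_of_subset (subset_univ _), hT3, card_univ, Fintype.card_fin] at hcard
  omega

/-- The binary vector with support `A`. -/
def indVec {n : ℕ} (A : Finset (Fin n)) : Fin n → ZMod 2 := fun i => if i ∈ A then 1 else 0

theorem indVec_symmDiff {n : ℕ} (A B : Finset (Fin n)) :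
    indVec (symmDiff A B) = indVec A - indVec B := by
  ext i
  simp only [indVec, mem_symmDiff, Pi.sub_apply]
  by_cases hA : i ∈ A <;> by_cases hB : i ∈ B <;> simp [hA, hB]

theorem hammingNorm_indVec {n : ℕ} (A : Finset (Fin n)) : hammingNorm (indVec A) = A.card := by
  simp [hammingNorm, indVec]

theorem no_code (C : Submodule (ZMod 2) (Fin 29 → ZMod 2))
    (hk : Module.finrank (ZMod 2) C = 17) (hd : ∀ x ∈ C, x ≠ 0 → 7 ≤ hammingNorm x) : False := by
  classical
  let Q := (Fin 29 → ZMod 2) ⧸ C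
  have : Finite Q := inferInstance
  let _ : Fintype Q := Fintype.ofFinite Q
  have hfr : Module.finrank (ZMod 2) Q = 12 := by
    have := C.finrank_quotient_add_finrank
    rw [hk, Module.finrank_fin_fun] at this
    change Module.finrank (ZMod 2) Q + 17 = 29 at this
    omega
  have hQ : Fintype.card Q = 4096 := by
    rw [Module.card_eq_pow_finrank (K := ZMod 2), hfr, ZMod.card]
    norm_num
  refine no_code_sets hQ {A | indVec A ∈ C} (fun A => C.mkQ (indVec A)) ?_ ?_ ?_
  · intro A B
    rw [Set.mem_ofPred_eq, indVec_symmDiff]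
    exact Submodule.Quotient.eq C
  · intro A hA hne
    have h := hd _ hA
    rw [← hammingNorm_ne_zero_iff, hammingNorm_indVec] at h
    exact h (card_ne_zero.2 (nonempty_iff_ne_empty.2 hne))
  · intro A hA B hB
    rw [Set.mem_ofPred_eq, indVec_symmDiff]
    exact C.sub_mem hA hB

/-- Padding with zero coordinates turns a code of length `n` into one of any length `m ≥ n`. -/
theorem pad_code {n m k d : ℕ} (hnm : n ≤ m) (C : Submodule (ZMod 2) (Fin n → ZMod 2))
    (hk : Module.finrank (ZMod 2) C = k) (hd : ∀ x ∈ C, x ≠ 0 → d ≤ hammingNorm x) :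
    ∃ C' : Submodule (ZMod 2) (Fin m → ZMod 2),
      Module.finrank (ZMod 2) C' = k ∧ ∀ x ∈ C', x ≠ 0 → d ≤ hammingNorm x := by
  classical
  let e : (Fin n → ZMod 2) →ₗ[ZMod 2] (Fin m → ZMod 2) :=
    { toFun := fun x i => if h : i.1 < n then x ⟨i, h⟩ else 0
      map_add' := by
        intro x y; ext i
        by_cases h : i.1 < n <;> simp [h]
      map_smul' := by
        intro a x; ext i
        by_cases h : i.1 < n <;> simp [h] }
  have he : ∀ x i, e x (Fin.castLE hnm i) = x i := by
    intro x i
    simp [e]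
  have hinj : Function.Injective e := by
    intro x y h
    ext i
    rw [← he x i, h, he]
  refine ⟨C.map e, ?_, ?_⟩
  · rw [← hk]
    exact (C.equivMapOfInjective e hinj).finrank_eq.symm
  · rintro _ ⟨x, hx, rfl⟩ hne
    refine (hd x hx (by rintro rfl; simp at hne)).trans ?_
    refine card_le_card_of_injOn (Fin.castLE hnm) ?_ (Fin.castLE_injective hnm).injOn
    intro i hi
    have : x i ≠ 0 := by simpa using hi
    simpa [he] using this

/-- The seven-fold repetition of `F_2^17`. -/
theorem exists_code_s17 : ∃ C : Submodule (ZMod 2) (Fin (17 * 7) → ZMod 2),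
    Module.finrank (ZMod 2) C = 17 ∧ ∀ x ∈ C, x ≠ 0 → 7 ≤ hammingNorm x := by
  classical
  let e : (Fin 17 → ZMod 2) →ₗ[ZMod 2] (Fin (17 * 7) → ZMod 2) :=
    LinearMap.funLeft (ZMod 2) (ZMod 2) Fin.divNat
  have he : ∀ x i j, e x (finProdFinEquiv (i, j)) = x i := by
    intro x i j
    have h := congrArg Prod.fst (finProdFinEquiv.symm_apply_apply (i, j))
    exact congrArg x h
  have hinj : Function.Injective e := by
    intro x y h
    ext i
    rw [← he x i 0, h, he]
  refine ⟨LinearMap.range e, ?_, ?_⟩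
  · rw [LinearMap.finrank_range_of_inj hinj, Module.finrank_fin_fun]
  · rintro _ ⟨x, rfl⟩ hne
    obtain ⟨i, hi⟩ : ∃ i, x i ≠ 0 := by
      by_contra! h
      exact hne (by rw [show x = 0 from funext h, map_zero])
    have : (univ : Finset (Fin 7)).card ≤ hammingNorm (e x) := by
      refine card_le_card_of_injOn (fun j => finProdFinEquiv (i, j)) ?_ ?_
      · intro j _
        simpa [he] using hi
      · intro j _ j' _ h
        simpa using h
    simpa using this

theorem le_NL : 30 ≤ NL 17 3 := by
  have hne : {n : ℕ | ∃ C : Submodule (ZMod 2) (Fin n → ZMod 2),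
      Module.finrank (ZMod 2) C = 17 ∧ ∀ x ∈ C, x ≠ 0 → 2 * 3 + 1 ≤ hammingNorm x}.Nonempty :=
    ⟨17 * 7, exists_code_s17⟩
  by_contra! h
  obtain ⟨C, hk, hd⟩ := Nat.sInf_mem hne
  obtain ⟨C', hk', hd'⟩ := pad_code (Nat.le_of_lt_succ h) C hk hd
  exact no_code C' hk' hd'

theorem Ham_eq : Ham 17 3 = 29 := by
  have hmem : 29 ∈ {n : ℕ | (∑ i ∈ Finset.range (3 + 1), n.choose i) * 2 ^ 17 ≤ 2 ^ n} := by
    rw [Set.mem_ofPred_eq]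
    decide
  refine le_antisymm (Nat.sInf_le hmem) (le_csInf ⟨_, hmem⟩ ?_)
  intro n hn
  rw [Set.mem_ofPred_eq] at hn
  by_contra! h
  have key : ∀ n < 29, ¬ (∑ i ∈ Finset.range (3 + 1), n.choose i) * 2 ^ 17 ≤ 2 ^ n := by decide
  exact key n h hn

/-- There is no linear `[29,17,7]₂` code; consequently `NL(17,3) ≥ 30`, which exceeds
the Hamming bound `Ham(17,3) = 29`. -/
theorem no_29_17_7_code :
    (¬ ∃ C : Submodule (ZMod 2) (Fin 29 → ZMod 2),
        Module.finrank (ZMod 2) C = 17 ∧ ∀ x ∈ C, x ≠ 0 → 7 ≤ hammingNorm x) ∧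
      30 ≤ NL 17 3 ∧ Ham 17 3 = 29 ∧ Ham 17 3 < NL 17 3 := by
  refine ⟨fun ⟨C, hk, hd⟩ => no_code C hk hd, le_NL, Ham_eq, ?_⟩
  rw [Ham_eq]
  exact le_NL
end
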